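/- Suppose lim a_{n+1}/a_n = η ∈ (1, ∞). Let l' = max{1, ⌊−log(η−v̂)/log η⌋ + 1}. For v̂ ∈ (0, η) and θ ∈ [η^l, (η^{l+1} − 1)/v̂) for some integer l ≥ l', the Hausdorff dimension of {ξ : v̂_{b,A}(ξ) ≥ v̂ and v_{b,A}(ξ) = θv̂} is at least (η^{l+1} − 1 − θv̂) / ((η^{l+1} − 1)(1 + θv̂)). -/

import Mathlib

/-!
The set contains an explicit Cantor-type set of numbers with prescribed base-`b` digits. Write
`M = l + 1`, `τ = θ * w`, `Q = η ^ M` and `A k = a (k * M)`. Position `i` holds the coefficient of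
`b ^ (-(i + 1))`, so the digits of the fractional part of `b ^ (a n) * ξ` are those of `ξ` from
position `a n` on.

*Prescribed digits.* All digits in the block `[A k, (1 + τ) * A k)` are zero; since `1 + τ < Q`, the
blocks are eventually disjoint, with room in between. Moreover, for each `n`, at the first place
at or after `a n` that lies beyond the block of index `n / M`, two consecutive digits are forced to
be different. All other digits are free.

*Exponents.* The blocks give `‖b ^ (A k) * ξ‖ ≤ b ^ (-τ * A k + 1)`. A change of digit at distance
at most `τ * a n` after `a n` gives `‖b ^ (a n) * ξ‖ ≥ b ^ (-τ * a n - 2)` for all large `n`. Hence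
`v = τ` (`vbA_eq_of_bounds`). If `k * M ≤ N ≤ k * M + l`, then `a N` is at most about `η ^ l * A k`
and `η ^ l * w ≤ τ`, so `b ^ (A k)` serves as the uniform approximation up to `N`, and `v̂ ≥ w`
(`le_vhatbA_of_bounds`).

*Dimension.* Sending a number of the Cantor set to the number formed by its free digits is a
surjection onto `[0, 1]`. If at least `r * n - C` of the first `n` positions are free for all `n`,
this map is Hölder of exponent `r`, so the dimension is at least `r` (`le_dimH_digits`). For the
density of the free positions, the number `G (A k)` of prescribed positions below `A k` satisfies
`G (A (k + 1)) ≤ G (A k) + τ * A k + 2 * M`, which makes it at most `σ * A k + O(1)` for any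
`σ > τ / (Q - 1)`. The proportion of free positions is then smallest at the ends of the blocks,
where it is about `(1 - τ / (Q - 1)) / (1 + τ)`, the claimed bound (`exists_le_count_free`).
-/

open Filter MeasureTheory Set

/-- Distance to the nearest integer. -/
noncomputable def dni (x : ℝ) : ℝ := |x - round x|

/-- Asymptotic approximation exponent `v_{b,A}(ξ)` (valued in `EReal`). -/
noncomputable def vbA (b : ℕ) (a : ℕ → ℕ) (ξ : ℝ) : EReal :=
  sSup ((fun v : ℝ => (v : EReal)) ''
    {v : ℝ | 0 ≤ v ∧ ∃ᶠ n in atTop, 1 ≤ n ∧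
      dni ((b : ℝ) ^ (a n) * ξ) < (b : ℝ) ^ (-(a n : ℝ) * v)})

/-- Uniform approximation exponent `v̂_{b,A}(ξ)` (valued in `EReal`). -/
noncomputable def vhatbA (b : ℕ) (a : ℕ → ℕ) (ξ : ℝ) : EReal :=
  sSup ((fun v : ℝ => (v : EReal)) ''
    {v : ℝ | 0 ≤ v ∧ ∀ᶠ N in atTop, ∃ n, 1 ≤ n ∧ n ≤ N ∧
      dni ((b : ℝ) ^ (a n) * ξ) < (b : ℝ) ^ (-(a N : ℝ) * v)})

open scoped NNReal ENNReal
open Real (ofDigits ofDigitsTerm)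

/-! ### Hausdorff dimension of sets of numbers with prescribed digits -/

/-- The integer whose base-`b` expansion is given by the first `n` digits of `d`. -/
def pre {b : ℕ} (d : ℕ → Fin b) : ℕ → ℤ
  | 0 => 0
  | n + 1 => b * pre d n + ((d n : ℕ) : ℤ)

lemma ofDigits_eq_pre {b : ℕ} (hb : 2 ≤ b) (d : ℕ → Fin b) (n : ℕ) :
    (b : ℝ) ^ n * ofDigits d = pre d n + ofDigits (fun i => d (i + n)) := by
  have hb0 : (b : ℝ) ≠ 0 := by positivity
  have key : ∀ n, (b : ℝ) ^ n * ∑ i ∈ Finset.range n, ofDigitsTerm d i = pre d n := by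
    intro n
    induction n with
    | zero => simp [pre]
    | succ n ih =>
      rw [Finset.sum_range_succ, mul_add, pow_succ', mul_assoc, ih]
      simp only [pre, ofDigitsTerm]
      push_cast
      field_simp
      ring
  rw [Real.ofDigits_eq_sum_add_ofDigits d n, mul_add, key, ← mul_assoc,
    mul_inv_cancel₀ (pow_ne_zero _ hb0), one_mul]

/-- Deleting the digits at which `d` and `d'` are known to agree does not increase the distance of
the integers formed by their initial digits. The signs are recorded as well, so that the induction
goes through. -/
lemma pre_sub_compare {b : ℕ} (hb : 2 ≤ b) (p : ℕ → Prop) [DecidablePred p]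
    (d d' : ℕ → Fin b) (hd : ∀ i, ¬ p i → d i = d' i) (n : ℕ) :
    let Δ := pre d n - pre d' n
    let H := pre (fun j => d (Nat.nth p j)) (Nat.count p n)
      - pre (fun j => d' (Nat.nth p j)) (Nat.count p n)
    (Δ = 0 ∧ H = 0) ∨ (1 ≤ H ∧ H ≤ Δ) ∨ (Δ ≤ H ∧ H ≤ -1) := by
  induction n with
  | zero => simp [pre]
  | succ n ih =>
    simp only at ih ⊢
    have h2 : (2 : ℤ) ≤ b := by exact_mod_cast hb
    have e1 : ((d n : ℕ) : ℤ) < b := by exact_mod_cast (d n).2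
    have e2 : ((d' n : ℕ) : ℤ) < b := by exact_mod_cast (d' n).2
    have e3 : (0 : ℤ) ≤ ((d n : ℕ) : ℤ) := by positivity
    have e4 : (0 : ℤ) ≤ ((d' n : ℕ) : ℤ) := by positivity
    by_cases hp : p n
    · rw [Nat.count_succ, if_pos hp]
      simp only [pre, Nat.nth_count hp]
      generalize pre (fun j => d (Nat.nth p j)) (Nat.count p n) = x at *
      generalize pre (fun j => d' (Nat.nth p j)) (Nat.count p n) = x' at *
      generalize pre d n = y at *
      generalize pre d' n = y' at *
      generalize ((d n : ℕ) : ℤ) = u at *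
      generalize ((d' n : ℕ) : ℤ) = v at *
      rcases ih with ⟨h, h'⟩ | ⟨h, h'⟩ | ⟨h, h'⟩
      · have : y = y' := by lia
        have : x = x' := by lia
        subst y x
        lia
      · right; left
        constructor <;> nlinarith
      · right; right
        constructor <;> nlinarith
    · rw [Nat.count_succ, if_neg hp]
      simp only [pre, hd n hp, add_zero]
      generalize pre (fun j => d (Nat.nth p j)) (Nat.count p n) = x at *
      generalize pre (fun j => d' (Nat.nth p j)) (Nat.count p n) = x' at *
      generalize pre d n = y at *
      generalize pre d' n = y' at *
      rcases ih with ⟨h, h'⟩ | ⟨h, h'⟩ | ⟨h, h'⟩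
      · left
        have : y = y' := by lia
        subst y
        exact ⟨by ring, h'⟩
      · right; left
        constructor <;> nlinarith
      · right; right
        constructor <;> nlinarith

/-- If two numbers that agree outside `p` are within `b ^ (-n)` of each other, then the numbers formed
by their digits in `p` are within `3 * b ^ (-m)`, where `m` counts the elements of `p` below `n`.
This covers expansions such as `0.0999…` and `0.1000…`, which are close without sharing digits. -/
lemma abs_extract_sub_le {b : ℕ} (hb : 2 ≤ b) (p : ℕ → Prop) [DecidablePred p]
    (d d' : ℕ → Fin b) (hd : ∀ i, ¬ p i → d i = d' i) (n : ℕ)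
    (h : |ofDigits d - ofDigits d'| ≤ ((b : ℝ)⁻¹) ^ n) :
    |ofDigits (fun j => d (Nat.nth p j)) - ofDigits (fun j => d' (Nat.nth p j))| ≤
      3 * ((b : ℝ)⁻¹) ^ (Nat.count p n) := by
  have hb0 : (0 : ℝ) < b := by positivity
  have hG : |pre d n - pre d' n| ≤ 2 := by
    have h1 := ofDigits_eq_pre hb d n
    have h2 := ofDigits_eq_pre hb d' n
    have h3 : |(b : ℝ) ^ n * ofDigits d - (b : ℝ) ^ n * ofDigits d'| ≤ 1 := by
      rw [← mul_sub, abs_mul, abs_of_pos (by positivity)]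
      calc _ ≤ (b : ℝ) ^ n * ((b : ℝ)⁻¹) ^ n := by gcongr
        _ = 1 := by rw [← mul_pow, mul_inv_cancel₀ hb0.ne', one_pow]
    rw [h1, h2] at h3
    have a1 := Real.ofDigits_nonneg (fun i => d (i + n))
    have a2 := Real.ofDigits_nonneg (fun i => d' (i + n))
    have a3 := Real.ofDigits_le_one (fun i => d (i + n))
    have a4 := Real.ofDigits_le_one (fun i => d' (i + n))
    rw [abs_le] at h3
    have : |((pre d n : ℝ) - pre d' n)| ≤ 2 := by
      rw [abs_le]; constructor <;> linarith
    exact_mod_cast this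
  have hH : |pre (fun j => d (Nat.nth p j)) (Nat.count p n)
      - pre (fun j => d' (Nat.nth p j)) (Nat.count p n)| ≤ 2 := by
    have := pre_sub_compare hb p d d' hd n
    simp only at this
    rw [abs_le] at hG ⊢
    lia
  set m := Nat.count p n
  have h1 := ofDigits_eq_pre hb (fun j => d (Nat.nth p j)) m
  have h2 := ofDigits_eq_pre hb (fun j => d' (Nat.nth p j)) m
  have a1 := Real.ofDigits_nonneg (fun i => (fun j => d (Nat.nth p j)) (i + m))
  have a2 := Real.ofDigits_nonneg (fun i => (fun j => d' (Nat.nth p j)) (i + m))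
  have a3 := Real.ofDigits_le_one (fun i => (fun j => d (Nat.nth p j)) (i + m))
  have a4 := Real.ofDigits_le_one (fun i => (fun j => d' (Nat.nth p j)) (i + m))
  have hH' : |(pre (fun j => d (Nat.nth p j)) m : ℝ) - pre (fun j => d' (Nat.nth p j)) m| ≤ 2 := by
    exact_mod_cast hH
  have h3 : |(b : ℝ) ^ m * (ofDigits (fun j => d (Nat.nth p j))
      - ofDigits (fun j => d' (Nat.nth p j)))| ≤ 3 := by
    rw [mul_sub, h1, h2]
    rw [abs_le] at hH' ⊢
    constructor <;> linarith
  rw [abs_mul, abs_of_pos (by positivity)] at h3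
  rw [inv_pow, ← div_eq_mul_inv, le_div_iff₀ (by positivity), mul_comm]
  exact h3

/-- Hölder estimate for the map that keeps only the digits in `p`. For `ofDigits d = ofDigits d'` it
says that the value of this map does not depend on the choice of the expansion. -/
lemma abs_extract_sub_le_rpow {b : ℕ} (hb : 2 ≤ b) (p : ℕ → Prop) [DecidablePred p]
    (r C : ℝ) (hr : 0 < r) (hC : ∀ n : ℕ, r * n - C ≤ Nat.count p n)
    (d d' : ℕ → Fin b) (hd : ∀ i, ¬ p i → d i = d' i) :
    |ofDigits (fun j => d (Nat.nth p j)) - ofDigits (fun j => d' (Nat.nth p j))| ≤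
      (3 * (b : ℝ) ^ (C + r)) * |ofDigits d - ofDigits d'| ^ r := by
  have hb1 : (1 : ℝ) < b := by exact_mod_cast hb
  have hb0 : (0 : ℝ) < b := by positivity
  have key : ∀ n : ℕ, |ofDigits d - ofDigits d'| ≤ ((b : ℝ)⁻¹) ^ n →
      |ofDigits (fun j => d (Nat.nth p j)) - ofDigits (fun j => d' (Nat.nth p j))| ≤
        3 * (b : ℝ) ^ (C - r * n) := by
    intro n hn
    refine (abs_extract_sub_le hb p d d' hd n hn).trans ?_
    rw [inv_pow, ← Real.rpow_natCast, ← Real.rpow_neg hb0.le]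
    gcongr
    · exact hb1.le
    · linarith [hC n]
  rcases (abs_nonneg (ofDigits d - ofDigits d')).eq_or_lt with h0 | h0
  · rw [← h0, Real.zero_rpow hr.ne', mul_zero]
    have ht : Tendsto (fun n : ℕ => 3 * (b : ℝ) ^ (C - r * n)) atTop (nhds (3 * 0)) := by
      refine Tendsto.const_mul _ ?_
      refine (tendsto_rpow_atBot_of_base_gt_one _ hb1).comp ?_
      refine tendsto_atBot_add_const_left _ _ ?_
      exact tendsto_neg_atTop_atBot.comp (tendsto_natCast_atTop_atTop.const_mul_atTop hr)
    rw [mul_zero] at ht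
    exact ge_of_tendsto' ht fun n => key n (by rw [← h0]; positivity)
  · have hle : |ofDigits d - ofDigits d'| ≤ 1 := by
      have a1 := Real.ofDigits_nonneg d
      have a2 := Real.ofDigits_nonneg d'
      have a3 := Real.ofDigits_le_one d
      have a4 := Real.ofDigits_le_one d'
      rw [abs_le]; constructor <;> linarith
    obtain ⟨n, hn1, hn2⟩ := exists_nat_pow_near_of_lt_one h0 hle (inv_pos.2 hb0)
      (inv_lt_one_of_one_lt₀ hb1)
    refine (key n hn2).trans ?_
    rw [mul_assoc]
    gcongr
    have : (b : ℝ) ^ (C - r * n) = (b : ℝ) ^ (C + r) * (((b : ℝ)⁻¹) ^ (n + 1)) ^ r := by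
      rw [inv_pow, ← Real.rpow_natCast, ← Real.rpow_neg hb0.le, ← Real.rpow_mul hb0.le,
        ← Real.rpow_add hb0]
      congr 1
      push_cast
      ring
    rw [this]
    gcongr

/-- If the set `p` of free positions has at least `r * n - C` elements below each `n`, then the numbers
whose digits outside `p` are prescribed form a set of Hausdorff dimension at least `r`. -/
theorem le_dimH_digits {b : ℕ} (hb : 2 ≤ b) (p : ℕ → Prop) [DecidablePred p]
    (c : ℕ → Fin b) (r : ℝ≥0) (hr : 0 < r) (C : ℝ)
    (hC : ∀ n : ℕ, (r : ℝ) * n - C ≤ Nat.count p n) :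
    (r : ℝ≥0∞) ≤ dimH (ofDigits '' {d : ℕ → Fin b | ∀ i, ¬ p i → d i = c i}) := by
  set D := {d : ℕ → Fin b | ∀ i, ¬ p i → d i = c i} with hD
  have hb0 : (0 : ℝ) < b := by positivity
  have key : ∀ d ∈ D, ∀ d' ∈ D,
      |ofDigits (fun j => d (Nat.nth p j)) - ofDigits (fun j => d' (Nat.nth p j))| ≤
      (3 * (b : ℝ) ^ (C + r)) * |ofDigits d - ofDigits d'| ^ (r : ℝ) := fun d hd d' hd' =>
    abs_extract_sub_le_rpow hb p r C hr hC d d' fun i hi => (hd i hi).trans (hd' i hi).symm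
  have hinf : (Set.ofPred p).Infinite := by
    intro hf
    obtain ⟨n, hn⟩ := exists_nat_gt ((C + hf.toFinset.card) / r)
    rw [div_lt_iff₀ (by exact_mod_cast hr)] at hn
    have h1 := hC n
    have h2 : (Nat.count p n : ℝ) ≤ hf.toFinset.card := by
      exact_mod_cast Nat.count_le_card hf n
    linarith
  have : Nonempty (ℕ → Fin b) := ⟨c⟩
  let inv : ℝ → (ℕ → Fin b) := Function.invFunOn ofDigits D
  have hinv1 : ∀ x ∈ ofDigits '' D, inv x ∈ D := fun x hx => Function.invFunOn_mem hx
  have hinv2 : ∀ x ∈ ofDigits '' D, ofDigits (inv x) = x := fun x hx => Function.invFunOn_eq hx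
  let f : ℝ → ℝ := fun x => ofDigits (fun j => inv x (Nat.nth p j))
  have hf : HolderOnWith (3 * (b : ℝ≥0) ^ (C + r)) r f (ofDigits '' D) := by
    intro x hx y hy
    have := key _ (hinv1 x hx) _ (hinv1 y hy)
    rw [hinv2 x hx, hinv2 y hy, ← Real.dist_eq, ← Real.dist_eq] at this
    rw [edist_dist, edist_dist, ENNReal.ofReal_rpow_of_nonneg dist_nonneg r.coe_nonneg,
      ← ENNReal.ofReal_coe_nnreal (p := 3 * (b : ℝ≥0) ^ (C + r)), ← ENNReal.ofReal_mul (by positivity)]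
    refine ENNReal.ofReal_le_ofReal ?_
    push_cast
    exact this
  have hsurj : Icc (0 : ℝ) 1 ⊆ f '' (ofDigits '' D) := by
    intro y hy
    obtain ⟨s, -, rfl⟩ := Real.ofDigits_SurjOn (b := b) (by lia) hy
    let d : ℕ → Fin b := fun i => if p i then s (Nat.count p i) else c i
    have hd : d ∈ D := fun i hi => if_neg hi
    have hds : (fun j => d (Nat.nth p j)) = s := by
      funext j
      simp only [d]
      rw [if_pos (Nat.nth_mem_of_infinite hinf j), Nat.count_nth_of_infinite hinf]
    have hx : ofDigits d ∈ ofDigits '' D := ⟨d, hd, rfl⟩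
    refine ⟨ofDigits d, hx, ?_⟩
    have := key _ (hinv1 _ hx) _ hd
    rw [hinv2 _ hx, sub_self, abs_zero, Real.zero_rpow (by exact_mod_cast hr.ne'), mul_zero] at this
    rw [← hds]
    exact sub_eq_zero.1 (abs_nonpos_iff.1 this)
  have h1 : (1 : ℝ≥0∞) ≤ dimH (ofDigits '' D) / r := by
    calc (1 : ℝ≥0∞) = dimH (Icc (0 : ℝ) 1) := by
          rw [Real.dimH_of_nonempty_interior (by simp)]; simp
      _ ≤ dimH (f '' (ofDigits '' D)) := dimH_mono hsurj
      _ ≤ _ := hf.dimH_image_le hr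
  have hr' : (r : ℝ≥0∞) ≠ 0 := by exact_mod_cast hr.ne'
  rw [ENNReal.le_div_iff_mul_le (Or.inl hr') (Or.inl ENNReal.coe_ne_top), one_mul] at h1
  exact h1

/-! ### Distance to the nearest integer in terms of digits -/

lemma pre_bounds {b : ℕ} (d : ℕ → Fin b) (n : ℕ) :
    0 ≤ pre d n ∧ pre d n ≤ (b : ℤ) ^ n - 1 := by
  induction n with
  | zero => simp [pre]
  | succ n ih =>
    have e1 : ((d n : ℕ) : ℤ) + 1 ≤ b := by exact_mod_cast (d n).2
    simp only [pre]
    refine ⟨add_nonneg (mul_nonneg (by positivity) ih.1) (by positivity), ?_⟩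
    rw [pow_succ']
    nlinarith [ih.2]

/-- Two different consecutive digits can be neither both `0` nor both `b - 1`, which keeps the number
away from `0` and `1`. -/
lemma ofDigits_bounds {b : ℕ} (hb : 2 ≤ b) (d : ℕ → Fin b) (m : ℕ) (h : d m ≠ d (m + 1)) :
    (((b : ℝ) ^ (m + 2))⁻¹ ≤ ofDigits d) ∧ (ofDigits d ≤ 1 - ((b : ℝ) ^ (m + 2))⁻¹) := by
  have hb0 : (0 : ℝ) < b := by positivity
  have h1 := ofDigits_eq_pre hb d (m + 2)
  obtain ⟨p1, p2⟩ := pre_bounds d m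
  have h2 : (2 : ℤ) ≤ b := by exact_mod_cast hb
  have e1 : ((d m : ℕ) : ℤ) < b := by exact_mod_cast (d m).2
  have e2 : ((d (m + 1) : ℕ) : ℤ) < b := by exact_mod_cast (d (m + 1)).2
  have e3 : (0 : ℤ) ≤ ((d m : ℕ) : ℤ) := by positivity
  have e4 : (0 : ℤ) ≤ ((d (m + 1) : ℕ) : ℤ) := by positivity
  have e5 : ((d m : ℕ) : ℤ) ≠ ((d (m + 1) : ℕ) : ℤ) := by
    intro h'; exact h (Fin.ext (by exact_mod_cast h'))
  have hpre : pre d (m + 2) = b * (b * pre d m + ((d m : ℕ) : ℤ)) + ((d (m + 1) : ℕ) : ℤ) := rfl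
  have key : 1 ≤ pre d (m + 2) ∧ pre d (m + 2) ≤ (b : ℤ) ^ (m + 2) - 2 := by
    have hpow : (b : ℤ) ^ (m + 2) = b * (b * (b : ℤ) ^ m) := by ring
    rw [hpre, hpow]
    generalize (b : ℤ) ^ m = B at *
    generalize ((d m : ℕ) : ℤ) = x at *
    generalize ((d (m + 1) : ℕ) : ℤ) = y at *
    generalize pre d m = z at *
    generalize (b : ℤ) = β at *
    have hz : 0 ≤ β * z := mul_nonneg (by lia) p1
    constructor
    · rcases e3.eq_or_lt with hx | hx
      · have : 1 ≤ y := by lia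
        nlinarith [mul_nonneg (by lia : (0 : ℤ) ≤ β) hz]
      · nlinarith [mul_nonneg (by lia : (0 : ℤ) ≤ β) hz]
    · have h3 : β * z ≤ β * B - β := by nlinarith
      rcases (by lia : x ≤ β - 2 ∨ y ≤ β - 2) with hx | hx
      · nlinarith [mul_le_mul_of_nonneg_left (add_le_add h3 hx) (by lia : (0 : ℤ) ≤ β)]
      · have : x ≤ β - 1 := by lia
        nlinarith [mul_le_mul_of_nonneg_left (add_le_add h3 this) (by lia : (0 : ℤ) ≤ β)]
  have k1 : (1 : ℝ) ≤ pre d (m + 2) := by exact_mod_cast key.1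
  have k2 : (pre d (m + 2) : ℝ) ≤ (b : ℝ) ^ (m + 2) - 2 := by exact_mod_cast key.2
  have a1 := Real.ofDigits_nonneg (fun i => d (i + (m + 2)))
  have a3 := Real.ofDigits_le_one (fun i => d (i + (m + 2)))
  have hB : (0 : ℝ) < (b : ℝ) ^ (m + 2) := by positivity
  have hBi : (b : ℝ) ^ (m + 2) * ((b : ℝ) ^ (m + 2))⁻¹ = 1 := mul_inv_cancel₀ hB.ne'
  constructor
  · refine le_of_mul_le_mul_left ?_ hB
    linarith
  · refine le_of_mul_le_mul_left ?_ hB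
    rw [mul_sub]
    linarith

lemma le_dni_of_ne {b : ℕ} (hb : 2 ≤ b) (d : ℕ → Fin b) (n j : ℕ) (hnj : n ≤ j)
    (h : d j ≠ d (j + 1)) :
    (b : ℝ) ^ (-((j : ℝ) - n + 2)) ≤ dni ((b : ℝ) ^ n * ofDigits d) := by
  have hb0 : (0 : ℝ) < b := by positivity
  obtain ⟨m, rfl⟩ := Nat.exists_eq_add_of_le' hnj
  have h' := ofDigits_bounds hb (fun i => d (i + n)) m (by
    simpa [add_right_comm] using h)
  have hε : (b : ℝ) ^ (-(((m + n : ℕ) : ℝ) - n + 2)) = ((b : ℝ) ^ (m + 2))⁻¹ := by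
    rw [Real.rpow_neg hb0.le, ← Real.rpow_natCast]
    push_cast
    ring_nf
  rw [hε, dni, ofDigits_eq_pre hb d n]
  set y := ofDigits (fun i => d (i + n))
  have hε0 : (0 : ℝ) < ((b : ℝ) ^ (m + 2))⁻¹ := by positivity
  generalize round ((pre d n : ℝ) + y) = k
  rcases le_or_gt k (pre d n) with hk | hk
  · have : (k : ℝ) ≤ pre d n := by exact_mod_cast hk
    exact le_trans (by linarith) (le_abs_self _)
  · have : (pre d n : ℝ) + 1 ≤ k := by exact_mod_cast hk
    exact le_trans (by linarith) (neg_le_abs _)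

lemma dni_le_of_zero {b : ℕ} (hb : 2 ≤ b) (d : ℕ → Fin b) (n e : ℕ) (hne : n ≤ e)
    (h : ∀ i, n ≤ i → i < e → (d i : ℕ) = 0) :
    dni ((b : ℝ) ^ n * ofDigits d) ≤ (b : ℝ) ^ (-((e : ℝ) - n)) := by
  have hb0 : (0 : ℝ) < b := by positivity
  obtain ⟨m, rfl⟩ := Nat.exists_eq_add_of_le' hne
  have hz : ∀ t ≤ m, pre (fun i => d (i + n)) t = 0 := by
    intro t ht
    induction t with
    | zero => rfl
    | succ t ih =>
      simp only [pre]
      rw [ih (by lia), h (t + n) (by lia) (by lia)]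
      simp
  have h1 := ofDigits_eq_pre hb (fun i => d (i + n)) m
  rw [hz m le_rfl] at h1
  have hε : (b : ℝ) ^ (-(((m + n : ℕ) : ℝ) - n)) = ((b : ℝ) ^ m)⁻¹ := by
    rw [Real.rpow_neg hb0.le, ← Real.rpow_natCast]
    push_cast
    ring_nf
  rw [hε, dni, ofDigits_eq_pre hb d n]
  refine (round_le _ (pre d n)).trans ?_
  rw [add_sub_cancel_left, abs_of_nonneg (Real.ofDigits_nonneg _)]
  refine le_of_mul_le_mul_left ?_ (by positivity : (0 : ℝ) < (b : ℝ) ^ m)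
  rw [h1, mul_inv_cancel₀ (by positivity)]
  simpa using Real.ofDigits_le_one (fun i => d (i + m + n))

/-! ### The prescribed digits -/

lemma tendsto_ratio {a : ℕ → ℕ} (hpos : ∀ n, 1 ≤ a n) {η : ℝ}
    (hη : Tendsto (fun n => (a (n + 1) : ℝ) / (a n : ℝ)) atTop (nhds η)) (j : ℕ) :
    Tendsto (fun n => (a (n + j) : ℝ) / (a n : ℝ)) atTop (nhds (η ^ j)) := by
  have hne : ∀ n, (a n : ℝ) ≠ 0 := fun n => by have := hpos n; positivity
  induction j with
  | zero => simp [hne]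
  | succ j ih =>
    have := (hη.comp (tendsto_add_atTop_nat j)).mul ih
    rw [pow_succ']
    refine this.congr fun n => ?_
    simp only [Function.comp]
    rw [div_mul_div_cancel₀ (hne _)]
    rfl

lemma tendsto_const_div {a : ℕ → ℕ} (ha : StrictMono a) (c : ℝ) :
    Tendsto (fun n => c / (a n : ℝ)) atTop (nhds 0) :=
  tendsto_const_nhds.div_atTop (tendsto_natCast_atTop_atTop.comp ha.tendsto_atTop)

lemma eventually_lt_shift {a : ℕ → ℕ} (ha : StrictMono a) (hpos : ∀ n, 1 ≤ a n) {η : ℝ}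
    (hη : Tendsto (fun n => (a (n + 1) : ℝ) / (a n : ℝ)) atTop (nhds η)) (j : ℕ) (x c : ℝ)
    (hx : x < η ^ j) : ∀ᶠ n in atTop, x * a n + c < a (n + j) := by
  have h := (tendsto_ratio hpos hη j).sub (tendsto_const_div ha c)
  rw [sub_zero] at h
  filter_upwards [h.eventually_const_lt hx] with n hn
  have h0 : (0 : ℝ) < a n := by exact_mod_cast hpos n
  rw [← sub_div, lt_div_iff₀ h0] at hn
  linarith

lemma eventually_shift_lt {a : ℕ → ℕ} (ha : StrictMono a) (hpos : ∀ n, 1 ≤ a n) {η : ℝ}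
    (hη : Tendsto (fun n => (a (n + 1) : ℝ) / (a n : ℝ)) atTop (nhds η)) (j : ℕ) (x c : ℝ)
    (hx : η ^ j < x) : ∀ᶠ n in atTop, a (n + j) + c < x * a n := by
  have h := (tendsto_ratio hpos hη j).add (tendsto_const_div ha c)
  rw [add_zero] at h
  filter_upwards [h.eventually_lt_const hx] with n hn
  have h0 : (0 : ℝ) < a n := by exact_mod_cast hpos n
  rwa [← add_div, div_lt_iff₀ h0] at hn

/-- The end, itself excluded, of the block of zeros that starts at position `a (k * M)`. -/
noncomputable def blockEnd (a : ℕ → ℕ) (M : ℕ) (τ : ℝ) (k : ℕ) : ℕ :=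
  ⌊(1 + τ) * a (k * M)⌋₊

/-- The first position at or after `a n` that lies beyond the block of zeros of index `n / M`. The
digits at this position and the next are forced to differ. -/
noncomputable def marker (a : ℕ → ℕ) (M : ℕ) (τ : ℝ) (n : ℕ) : ℕ :=
  max (a n) (blockEnd a M τ (n / M))

/-- The position `i` belongs to one of the blocks of zeros. -/
def InBlock (a : ℕ → ℕ) (M : ℕ) (τ : ℝ) (i : ℕ) : Prop :=
  ∃ k, a (k * M) ≤ i ∧ i < blockEnd a M τ k

/-- The digit at position `i` is prescribed: `i` is in a block of zeros or is one of the two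
consecutive positions at which the digits are forced to differ. -/
def Fixed (a : ℕ → ℕ) (M : ℕ) (τ : ℝ) (i : ℕ) : Prop :=
  InBlock a M τ i ∨ ∃ n, i = marker a M τ n ∨ i = marker a M τ n + 1

open Classical in
/-- The prescribed digits: zero in the blocks of zeros and the parity of the position elsewhere, so
that two consecutive prescribed digits outside the blocks are different. -/
noncomputable def fixedDigit {b : ℕ} (hb : 2 ≤ b) (a : ℕ → ℕ) (M : ℕ) (τ : ℝ) (i : ℕ) : Fin b :=
  if InBlock a M τ i then ⟨0, by lia⟩ else ⟨i % 2, by lia⟩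

lemma blockEnd_mono {a : ℕ → ℕ} (ha : StrictMono a) (M : ℕ) {τ : ℝ} (hτ : 0 < τ) :
    Monotone (blockEnd a M τ) := by
  intro k k' h
  refine Nat.floor_le_floor ?_
  have : a (k * M) ≤ a (k' * M) := ha.monotone (Nat.mul_le_mul_right M h)
  gcongr

lemma marker_mono {a : ℕ → ℕ} (ha : StrictMono a) (M : ℕ) {τ : ℝ} (hτ : 0 < τ) :
    Monotone (marker a M τ) := by
  intro n n' h
  exact max_le_max (ha.monotone h) (blockEnd_mono ha M hτ (Nat.div_le_div_right h))

lemma le_blockEnd (a : ℕ → ℕ) (M : ℕ) {τ : ℝ} (hτ : 0 < τ) (k : ℕ) :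
    a (k * M) ≤ blockEnd a M τ k := by
  refine Nat.le_floor ?_
  have : (0 : ℝ) ≤ a (k * M) := by positivity
  nlinarith

lemma blockEnd_le (a : ℕ → ℕ) (M : ℕ) {τ : ℝ} (hτ : 0 < τ) (k : ℕ) :
    (blockEnd a M τ k : ℝ) ≤ (1 + τ) * a (k * M) :=
  Nat.floor_le (by positivity)

lemma lt_blockEnd (a : ℕ → ℕ) (M : ℕ) (τ : ℝ) (k : ℕ) :
    (1 + τ) * a (k * M) < blockEnd a M τ k + 1 :=
  Nat.lt_floor_add_one _

/-- From some index on, the markers stay clear of the next block of zeros. This is where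
`1 + τ < η ^ M` enters. -/
lemma exists_marker_lt {a : ℕ → ℕ} (ha : StrictMono a) (hpos : ∀ n, 1 ≤ a n) {η : ℝ} (hη1 : 1 < η)
    (hη : Tendsto (fun n => (a (n + 1) : ℝ) / (a n : ℝ)) atTop (nhds η)) {M : ℕ} (hM : 0 < M)
    {τ : ℝ} (hτ : 0 < τ) (hτM : 1 + τ < η ^ M) :
    ∃ K, ∀ n, K ≤ n / M → marker a M τ n + 1 < a ((n / M + 1) * M) := by
  obtain ⟨K₁, h₁⟩ := eventually_atTop.1 (eventually_lt_shift ha hpos hη M (1 + τ) 1 hτM)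
  obtain ⟨K₂, h₂⟩ := eventually_atTop.1
    (eventually_lt_shift ha hpos hη 1 1 1 (by simpa using hη1))
  refine ⟨max K₁ K₂, fun n hn => ?_⟩
  have hn1 : n / M ≤ n := Nat.div_le_self n M
  have hn2 : n + 1 ≤ (n / M + 1) * M := Nat.lt_mul_of_div_lt (Nat.lt_succ_self _) hM
  have hn3 : n / M ≤ n / M * M := Nat.le_mul_of_pos_right _ hM
  rw [marker, ← max_add_add_right]
  refine max_lt ?_ ?_
  · have := h₂ n (by lia)
    rw [one_mul] at this
    have : a n + 1 < a (n + 1) := by exact_mod_cast this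
    exact this.trans_le (ha.monotone hn2)
  · have := h₁ (n / M * M) (by lia)
    have h3 := blockEnd_le a M hτ (n / M)
    have : (blockEnd a M τ (n / M) : ℝ) + 1 < a (n / M * M + M) := by linarith
    rw [add_mul, one_mul]
    exact_mod_cast this

lemma not_inBlock {a : ℕ → ℕ} (ha : StrictMono a) {M : ℕ} {τ : ℝ} (hτ : 0 < τ) (k i : ℕ)
    (h1 : blockEnd a M τ k ≤ i) (h2 : i < a ((k + 1) * M)) : ¬ InBlock a M τ i := by
  rintro ⟨j, hj1, hj2⟩
  rcases le_or_gt j k with h | h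
  · have := blockEnd_mono ha M hτ h
    lia
  · have := ha.monotone (Nat.mul_le_mul_right M h : (k + 1) * M ≤ j * M)
    lia

lemma fixedDigit_ne {b : ℕ} (hb : 2 ≤ b) {a : ℕ → ℕ} (ha : StrictMono a) {M : ℕ} {τ : ℝ}
    (hτ : 0 < τ) (n : ℕ) (h : marker a M τ n + 1 < a ((n / M + 1) * M)) :
    fixedDigit hb a M τ (marker a M τ n) ≠ fixedDigit hb a M τ (marker a M τ n + 1) := by
  have h0 : blockEnd a M τ (n / M) ≤ marker a M τ n := le_max_right _ _
  rw [fixedDigit, fixedDigit, if_neg (not_inBlock ha hτ (n / M) _ h0 (by lia)),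
    if_neg (not_inBlock ha hτ (n / M) _ (by lia) h)]
  intro h'
  have := congrArg Fin.val h'
  simp only at this
  lia

open Classical in
/-- At most `τ * a (k * M) + 2 * M` positions are prescribed between the starts of two consecutive
blocks: those in the block itself and two for each `n` with `n / M = k`. -/
lemma count_fixed_le {a : ℕ → ℕ} (ha : StrictMono a) {M : ℕ} (hM : 0 < M) {τ : ℝ} (hτ : 0 < τ)
    {K : ℕ} (hK : ∀ n, K ≤ n / M → marker a M τ n + 1 < a ((n / M + 1) * M)) (k : ℕ) (hk : K < k)
    (t : ℕ) (ht : a (k * M) + t ≤ a ((k + 1) * M)) :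
    (Nat.count (Fixed a M τ) (a (k * M) + t) : ℝ) ≤
      Nat.count (Fixed a M τ) (a (k * M)) + τ * a (k * M) + 2 * M := by
  obtain ⟨k', rfl⟩ : ∃ k', k = k' + 1 := ⟨k - 1, by lia⟩
  set k := k' + 1 with hkdef
  set A := a (k * M) with hA
  have hprev : (k * M - 1) / M = k' := by
    have : k * M - 1 = k' * M + (M - 1) := by rw [hkdef, add_mul]; lia
    rw [this, mul_comm, Nat.mul_add_div hM, Nat.div_eq_of_lt (by lia), add_zero]
  -- Every marker of a block of smaller index is at most the last marker of the preceding block.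
  have hlast : ∀ n, n / M < k → marker a M τ n + 1 < A := by
    intro n hn
    have h1 : n < k * M := (Nat.div_lt_iff_lt_mul hM).1 hn
    have h2 := hK (k * M - 1) (by rw [hprev]; lia)
    rw [hprev] at h2
    have := marker_mono ha M hτ (by lia : n ≤ k * M - 1)
    lia
  have hsub : {x ∈ Finset.range t | Fixed a M τ (A + x)} ⊆
      (Finset.range (blockEnd a M τ k - A) ∪
        (Finset.range M).image fun j => marker a M τ (k * M + j) - A) ∪
        (Finset.range M).image fun j => marker a M τ (k * M + j) + 1 - A := by
    intro x hx
    rw [Finset.mem_filter, Finset.mem_range] at hx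
    obtain ⟨hxt, hx⟩ := hx
    have hxA : A + x < a ((k + 1) * M) := by lia
    simp only [Finset.mem_union, Finset.mem_range, Finset.mem_image]
    rcases hx with ⟨j, hj1, hj2⟩ | ⟨n, hn⟩
    · left; left
      rcases lt_trichotomy j k with h | h | h
      · exfalso
        have h1 := hlast (j * M) (by rwa [Nat.mul_div_cancel _ hM])
        have h2 : blockEnd a M τ (j * M / M) ≤ marker a M τ (j * M) := le_max_right _ _
        rw [Nat.mul_div_cancel _ hM] at h2
        lia
      · subst h; lia
      · exfalso
        have := ha.monotone (Nat.mul_le_mul_right M h : (k + 1) * M ≤ j * M)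
        lia
    · have h1 : ¬ n / M < k := fun h => by have := hlast n h; lia
      have h2 : n < (k + 1) * M := by
        by_contra! h
        have := ha.monotone h
        have h3 : a n ≤ marker a M τ n := le_max_left _ _
        lia
      have h3 : k * M ≤ n := (Nat.le_div_iff_mul_le hM).1 (not_lt.1 h1)
      have h4 : n - k * M < M := by rw [add_mul] at h2; lia
      have h5 : k * M + (n - k * M) = n := by lia
      rcases hn with hn | hn
      · left; right
        exact ⟨n - k * M, h4, by rw [h5]; lia⟩
      · right
        exact ⟨n - k * M, h4, by rw [h5]; lia⟩
  have hcard := Finset.card_le_card hsub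
  have hc2 := (hcard.trans (Finset.card_union_le _ _)).trans
    (Nat.add_le_add (Finset.card_union_le _ _) Finset.card_image_le)
  have hc3 : ((Finset.range M).image fun j => marker a M τ (k * M + j) - A).card ≤ M :=
    Finset.card_image_le.trans (by simp)
  rw [← Nat.count_eq_card_filter_range, Finset.card_range, Finset.card_range] at hc2
  have hc4 : Nat.count (Fixed a M τ) (A + t) + A ≤
      Nat.count (Fixed a M τ) A + blockEnd a M τ k + 2 * M := by
    rw [Nat.count_add]
    have := le_blockEnd a M hτ k
    lia
  have hc5 : (Nat.count (Fixed a M τ) (A + t) : ℝ) + A ≤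
      Nat.count (Fixed a M τ) A + blockEnd a M τ k + 2 * M := by exact_mod_cast hc4
  have := blockEnd_le a M hτ k
  linarith

lemma exists_between_terms {f : ℕ → ℕ} (hf : StrictMono f) (k₀ : ℕ) (i : ℕ) (hi : f k₀ ≤ i) :
    ∃ k, k₀ ≤ k ∧ f k ≤ i ∧ i < f (k + 1) := by
  induction i, hi using Nat.le_induction with
  | base => exact ⟨k₀, le_rfl, le_rfl, hf (Nat.lt_succ_self _)⟩
  | succ i hi ih =>
    obtain ⟨k, h1, h2, h3⟩ := ih
    rcases (by lia : i + 1 < f (k + 1) ∨ f (k + 1) = i + 1) with h | h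
    · exact ⟨k, h1, by lia, h⟩
    · have := hf (Nat.lt_succ_self (k + 1))
      exact ⟨k + 1, by lia, by lia, by lia⟩

open Classical in
/-- The free positions have lower density at least `r`, in the quantitative form needed for
`le_dimH_digits`. -/
lemma exists_le_count_free {a : ℕ → ℕ} (ha : StrictMono a) (hpos : ∀ n, 1 ≤ a n) {η : ℝ}
    (hη1 : 1 < η) (hη : Tendsto (fun n => (a (n + 1) : ℝ) / (a n : ℝ)) atTop (nhds η))
    {M : ℕ} (hM : 0 < M) {τ : ℝ} (hτ : 0 < τ) (hτM : 1 + τ < η ^ M) {r : ℝ} (hr : 0 < r)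
    (hrτ : r * (1 + τ) < 1 - τ / (η ^ M - 1)) :
    ∃ C, ∀ n : ℕ, r * n - C ≤ Nat.count (fun i => ¬ Fixed a M τ i) n := by
  obtain ⟨K, hK⟩ := exists_marker_lt ha hpos hη1 hη hM hτ hτM
  have hQ : 0 < η ^ M - 1 := by linarith
  obtain ⟨σ, hσ1, hσ2⟩ := exists_between (by linarith : τ / (η ^ M - 1) < 1 - r * (1 + τ))
  have hσ0 : 0 < σ := (div_pos hτ hQ).trans hσ1
  rw [div_lt_iff₀ hQ] at hσ1
  have hσQ : (σ + τ) / σ < η ^ M := by rw [div_lt_iff₀ hσ0]; linarith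
  obtain ⟨K', hK'⟩ := eventually_atTop.1
    (eventually_lt_shift ha hpos hη M ((σ + τ) / σ) (2 * M / σ) hσQ)
  set k₀ := max (K + 1) K' with hk₀
  set G := Nat.count (Fixed a M τ) with hG
  have hstrict : StrictMono fun k => a (k * M) := fun x y h => ha (Nat.mul_lt_mul_of_pos_right h hM)
  have hblock : ∀ k, k₀ ≤ k → (G (a (k * M)) : ℝ) ≤ σ * a (k * M) + G (a (k₀ * M)) := by
    intro k hk
    induction k, hk using Nat.le_induction with
    | base => have : 0 ≤ σ * (a (k₀ * M) : ℝ) := by positivity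
              linarith
    | succ k hk ih =>
      have hle : a (k * M) ≤ a ((k + 1) * M) := (hstrict (Nat.lt_succ_self k)).le
      have h1 := count_fixed_le ha hM hτ hK k (by lia) (a ((k + 1) * M) - a (k * M)) (by lia)
      rw [Nat.add_sub_cancel' hle] at h1
      have h2 := hK' (k * M) (by have := Nat.le_mul_of_pos_right k hM; lia)
      have h3 : k * M + M = (k + 1) * M := by ring
      rw [h3] at h2
      have h4 := mul_lt_mul_of_pos_left h2 hσ0
      have h5 : σ * ((σ + τ) / σ * (a (k * M) : ℝ) + 2 * M / σ) =
        (σ + τ) * a (k * M) + 2 * M := by field_simp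
      rw [h5] at h4
      linarith
  have hr1 : r < 1 := by nlinarith
  set C := (G (a (k₀ * M)) : ℝ) + 2 * M + r * a (k₀ * M) with hC
  refine ⟨C, fun i => ?_⟩
  have hcount : (Nat.count (fun i => ¬ Fixed a M τ i) i : ℝ) = i - G i := by
    have : Nat.count (fun i => ¬ Fixed a M τ i) i + G i = i := by
      rw [hG]
      clear_value C
      clear hC
      induction i with
      | zero => simp
      | succ i ih => rw [Nat.count_succ, Nat.count_succ]; split_ifs <;> lia
    rw [eq_sub_iff_add_eq]
    exact_mod_cast this
  rw [hcount]
  have hp1 : (0 : ℝ) ≤ r * a (k₀ * M) := by positivity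
  have hp2 : (0 : ℝ) ≤ G (a (k₀ * M)) := by positivity
  rcases lt_or_ge i (a (k₀ * M)) with hi | hi
  · have h1 : (G i : ℝ) ≤ i := by
      have : G i ≤ i := Nat.count_le _
      exact_mod_cast this
    have h2 : (i : ℝ) ≤ a (k₀ * M) := by exact_mod_cast hi.le
    have h3 := mul_le_mul_of_nonneg_left h2 hr.le
    have h4 : (0 : ℝ) ≤ 2 * M := by positivity
    linarith
  · obtain ⟨k, hk1, hk2, hk3⟩ := exists_between_terms hstrict k₀ i hi
    have hb1 := hblock k hk1
    obtain ⟨t, rfl⟩ := Nat.exists_eq_add_of_le hk2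
    have h1 := count_fixed_le ha hM hτ hK k (by lia) t (by lia)
    have h2 : (G (a (k * M) + t) : ℝ) ≤ G (a (k * M)) + t := by
      have : G (a (k * M) + t) ≤ G (a (k * M)) + t := by
        rw [hG, Nat.count_add]
        exact Nat.add_le_add_left (Nat.count_le _) _
      exact_mod_cast this
    push_cast
    have hA : (0 : ℝ) ≤ a (k * M) := by positivity
    have h4 : (0 : ℝ) ≤ 2 * M := by positivity
    have hA' := mul_le_mul_of_nonneg_right hσ2.le hA
    -- Past the end of the block `count_fixed_le` is used; inside it, where all positions are
    -- prescribed, the trivial count.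
    rcases le_or_gt ((1 + τ) * (a (k * M) : ℝ)) (a (k * M) + t) with h | h
    · have := mul_le_mul_of_nonneg_left h (by linarith : 0 ≤ 1 - r)
      nlinarith
    · have := mul_le_mul_of_nonneg_left h.le hr.le
      nlinarith

/-! ### The exponents -/

lemma eventually_add_lt_mul {a : ℕ → ℕ} (ha : StrictMono a) (c : ℝ) {x y : ℝ} (h : x < y) :
    ∀ᶠ n in atTop, x * a n + c < y * a n := by
  have ht : Tendsto (fun n => (y - x) * (a n : ℝ)) atTop atTop :=
    (tendsto_natCast_atTop_atTop.comp ha.tendsto_atTop).const_mul_atTop (sub_pos.2 h)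
  filter_upwards [ht.eventually_gt_atTop c] with n hn
  linarith

lemma vbA_eq_of_bounds {b : ℕ} (hb : 2 ≤ b) {a : ℕ → ℕ} (ha : StrictMono a) {τ : ℝ} (hτ : 0 < τ)
    {ξ : ℝ} (hlow : ∀ᶠ n in atTop, (b : ℝ) ^ (-(τ * a n + 2)) ≤ dni ((b : ℝ) ^ (a n) * ξ))
    (hup : ∃ᶠ n in atTop, dni ((b : ℝ) ^ (a n) * ξ) ≤ (b : ℝ) ^ (-(τ * a n - 1))) :
    vbA b a ξ = (τ : EReal) := by
  have hb1 : (1 : ℝ) < b := by exact_mod_cast hb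
  apply le_antisymm
  · refine sSup_le ?_
    rintro _ ⟨v, ⟨-, hv⟩, rfl⟩
    refine EReal.coe_le_coe_iff.2 ?_
    by_contra! hτv
    obtain ⟨n, ⟨-, h1⟩, h2, h3⟩ :=
      (hv.and_eventually (hlow.and (eventually_add_lt_mul ha 2 hτv))).exists
    have := (Real.rpow_lt_rpow_left_iff hb1).1 (h2.trans_lt h1)
    linarith
  · refine EReal.ge_of_forall_gt_iff_ge.1 fun z hz => ?_
    have hz' : z < τ := by exact_mod_cast hz
    have hv : max z 0 < τ := max_lt hz' hτ
    refine le_trans (EReal.coe_le_coe_iff.2 (le_max_left z 0)) (le_sSup ⟨max z 0, ⟨le_max_right _ _,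
      ?_⟩, rfl⟩)
    refine (hup.and_eventually ((eventually_add_lt_mul ha 1 hv).and
      (eventually_ge_atTop 1))).mono ?_
    rintro n ⟨h1, h2, h3⟩
    refine ⟨h3, h1.trans_lt ((Real.rpow_lt_rpow_left_iff hb1).2 ?_)⟩
    linarith

lemma tendsto_block_start {M : ℕ} (hM : 0 < M) :
    Tendsto (fun N : ℕ => N / M * M) atTop atTop :=
  (tendsto_id.atTop_mul_const' hM).comp (Nat.tendsto_div_const_atTop hM.ne')

/-- For `N` between `k * (l + 1)` and `k * (l + 1) + l`, the approximation at `k * (l + 1)` is good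
enough for the uniform exponent, because `a N` is at most about `η ^ l * a (k * (l + 1))`. -/
lemma le_vhatbA_of_bounds {b : ℕ} (hb : 2 ≤ b) {a : ℕ → ℕ} (ha : StrictMono a)
    (hpos : ∀ n, 1 ≤ a n) {η : ℝ} (hη1 : 1 < η)
    (hη : Tendsto (fun n => (a (n + 1) : ℝ) / (a n : ℝ)) atTop (nhds η))
    {w : ℝ} (hw : 0 < w) {l : ℕ} {τ : ℝ} (hτ : η ^ l * w ≤ τ) {ξ : ℝ}
    (hup : ∀ k : ℕ, dni ((b : ℝ) ^ (a (k * (l + 1))) * ξ) ≤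
      (b : ℝ) ^ (-(τ * a (k * (l + 1)) - 1))) :
    (w : EReal) ≤ vhatbA b a ξ := by
  have hb1 : (1 : ℝ) < b := by exact_mod_cast hb
  refine EReal.ge_of_forall_gt_iff_ge.1 fun z hz => ?_
  have hz' : z < w := by exact_mod_cast hz
  obtain ⟨v, hv1, hv2⟩ := exists_between (max_lt hz' hw)
  have hv0 : 0 < v := (le_max_right z 0).trans_lt hv1
  refine le_trans (EReal.coe_le_coe_iff.2 ((le_max_left z 0).trans hv1.le))
    (le_sSup ⟨v, ⟨hv0.le, ?_⟩, rfl⟩)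
  have hlt : ∀ j ∈ Finset.range (l + 1), ∀ᶠ n in atTop, a (n + j) + 1 / v < τ / v * a n := by
    intro j hj
    refine eventually_shift_lt ha hpos hη j _ _ ?_
    rw [lt_div_iff₀ hv0]
    calc η ^ j * v ≤ η ^ l * v := by
          have := pow_le_pow_right₀ hη1.le (Nat.lt_succ_iff.1 (Finset.mem_range.1 hj))
          gcongr
      _ < η ^ l * w := by gcongr
      _ ≤ τ := hτ
  have hall := (Finset.eventually_all _).2 hlt
  filter_upwards [(tendsto_block_start (Nat.succ_pos l)).eventually hall,
    eventually_ge_atTop (l + 1)] with N hN hN1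
  have h1 : N / (l + 1) * (l + 1) + N % (l + 1) = N := Nat.div_add_mod' N (l + 1)
  have h2 : N % (l + 1) < l + 1 := Nat.mod_lt _ (Nat.succ_pos l)
  refine ⟨N / (l + 1) * (l + 1), by lia, by lia, (hup _).trans_lt
    ((Real.rpow_lt_rpow_left_iff hb1).2 ?_)⟩
  have h3 := hN (N % (l + 1)) (Finset.mem_range.2 h2)
  rw [Nat.succ_eq_add_one, h1] at h3
  have h4 := mul_lt_mul_of_pos_left h3 hv0
  rw [mul_add, mul_one_div_cancel hv0.ne', ← mul_assoc, mul_div_cancel₀ _ hv0.ne'] at h4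
  linarith

/-! ### The lower bound for the dimension -/

theorem stmt11 (b : ℕ) (hb : 2 ≤ b) (a : ℕ → ℕ) (ha : StrictMono a)
    (hpos : ∀ n, 1 ≤ a n) (η : ℝ) (hη1 : 1 < η)
    (hη : Tendsto (fun n => (a (n + 1) : ℝ) / (a n : ℝ)) atTop (nhds η))
    (w : ℝ) (hw : w ∈ Set.Ioo (0 : ℝ) η)
    (l : ℕ) (hl : max 1 (⌊(-Real.log (η - w)) / Real.log η⌋ + 1) ≤ (l : ℤ))
    (θ : ℝ) (hθ : θ ∈ Set.Ico (η ^ l) ((η ^ (l + 1) - 1) / w)) :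
    ENNReal.ofReal ((η ^ (l + 1) - 1 - θ * w) / ((η ^ (l + 1) - 1) * (1 + θ * w))) ≤
      dimH {ξ : ℝ | (w : EReal) ≤ vhatbA b a ξ ∧ vbA b a ξ = ((θ * w : ℝ) : EReal)} := by
  obtain ⟨hw0, hwη⟩ := hw
  obtain ⟨hθ1, hθ2⟩ := hθ
  have hη0 : 0 < η := by linarith
  rw [lt_div_iff₀ hw0] at hθ2
  have hτl : η ^ l * w ≤ θ * w := by gcongr
  have hτ : 0 < θ * w := lt_of_lt_of_le (by positivity) hτl
  generalize θ * w = τ at *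
  have hτM : 1 + τ < η ^ (l + 1) := by linarith
  have hM : 0 < l + 1 := Nat.succ_pos l
  have hQ : 0 < η ^ (l + 1) - 1 := by linarith
  have hsub : ofDigits '' {d : ℕ → Fin b | ∀ i, ¬ (¬ Fixed a (l + 1) τ i) →
      d i = fixedDigit hb a (l + 1) τ i} ⊆
      {ξ : ℝ | (w : EReal) ≤ vhatbA b a ξ ∧ vbA b a ξ = (τ : EReal)} := by
    rintro _ ⟨d, hd, rfl⟩
    have hd' : ∀ i, Fixed a (l + 1) τ i → d i = fixedDigit hb a (l + 1) τ i :=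
      fun i hi => hd i (not_not.2 hi)
    have hb1 : (1 : ℝ) < b := by exact_mod_cast hb
    have hup : ∀ k : ℕ, dni ((b : ℝ) ^ (a (k * (l + 1))) * ofDigits d) ≤
        (b : ℝ) ^ (-(τ * a (k * (l + 1)) - 1)) := by
      intro k
      refine (dni_le_of_zero hb d _ _ (le_blockEnd a (l + 1) hτ k) fun i h1 h2 => ?_).trans ?_
      · have hin : InBlock a (l + 1) τ i := ⟨k, h1, h2⟩
        rw [hd' i (Or.inl hin), fixedDigit, if_pos hin]
      · refine (Real.rpow_le_rpow_left_iff hb1).2 ?_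
        have := lt_blockEnd a (l + 1) τ k
        linarith
    refine ⟨le_vhatbA_of_bounds hb ha hpos hη1 hη hw0 hτl hup,
      vbA_eq_of_bounds hb ha hτ ?_ ?_⟩
    · obtain ⟨K, hK⟩ := exists_marker_lt ha hpos hη1 hη hM hτ hτM
      filter_upwards [(Nat.tendsto_div_const_atTop hM.ne').eventually_ge_atTop K] with n hn
      have hne := fixedDigit_ne hb ha hτ n (hK n hn)
      rw [← hd' _ (Or.inr ⟨n, Or.inl rfl⟩), ← hd' _ (Or.inr ⟨n, Or.inr rfl⟩)] at hne
      refine le_trans ((Real.rpow_le_rpow_left_iff hb1).2 ?_)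
        (le_dni_of_ne hb d (a n) _ (le_max_left _ _) hne)
      have h1 : (a (n / (l + 1) * (l + 1)) : ℝ) ≤ a n := by
        exact_mod_cast ha.monotone (Nat.div_mul_le_self n (l + 1))
      have h2 := blockEnd_le a (l + 1) hτ (n / (l + 1))
      have h3 : (marker a (l + 1) τ n : ℝ) ≤ (1 + τ) * a n := by
        rw [marker, Nat.cast_max]
        refine max_le ?_ (h2.trans (by gcongr))
        have : (0 : ℝ) ≤ τ * a n := by positivity
        linarith
      change -(τ * (a n : ℝ) + 2) ≤ -((marker a (l + 1) τ n : ℝ) - a n + 2)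
      linarith
    · exact frequently_atTop.2 fun N =>
        ⟨N * (l + 1), Nat.le_mul_of_pos_right N hM, hup N⟩
  refine le_trans ?_ (dimH_mono hsub)
  refine ENNReal.le_of_forall_nnreal_lt fun r hr => ?_
  rcases eq_or_ne r 0 with rfl | hr0
  · simp
  have hr0 : 0 < r := pos_iff_ne_zero.2 hr0
  have hr0' : (0 : ℝ) < r := by exact_mod_cast hr0
  rw [← ENNReal.ofReal_coe_nnreal, ENNReal.ofReal_lt_ofReal_iff_of_nonneg hr0'.le,
    lt_div_iff₀ (by positivity)] at hr
  have hrτ : (r : ℝ) * (1 + τ) < 1 - τ / (η ^ (l + 1) - 1) := by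
    rw [lt_sub_iff_add_lt, ← lt_sub_iff_add_lt', div_lt_iff₀ hQ]
    linarith
  classical
  obtain ⟨C, hC⟩ := exists_le_count_free ha hpos hη1 hη hM hτ hτM hr0' hrτ
  exact le_dimH_digits hb _ _ r hr0 C fun n => by convert hC n
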